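/- Cut elimination for SKS: every proof in the system SKS of a formula P can be transformed into a proof in the system KS of P; in particular the up rules ai↑, aw↑ and ac↑ are admissible for KS. -/

import Mathlib

/-!
Deep-inference systems SKSg, SKS and KS for classical propositional logic
(the calculus of structures).  Formulas are built from atoms `a`, their
negations `ā`, and the units `t` (true) and `f` (false) by disjunction
`[P,Q]` (`dis`) and conjunction `(P,Q)` (`con`), and are considered modulo
the congruence `Equiv` generated by associativity, commutativity and the
unit laws.  Rules apply inside an arbitrary one-hole context and modulo the
equivalence.
-/

namespace DI

/-- Formulas of the calculus of structures for classical logic: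
units `t`, `f`; atoms `pos a`; negated atoms `neg a`; disjunction `dis`
(written `[P,Q]`); conjunction `con` (written `(P,Q)`). -/
inductive F : Type where
  | tt  : F
  | ff  : F
  | pos : ℕ → F
  | neg : ℕ → F
  | dis : F → F → F
  | con : F → F → F
deriving DecidableEq

/-- Negation, pushed to the atoms by the De Morgan laws:
`¬t = f`, `¬f = t`, `¬[P,Q] = (¬P,¬Q)`, `¬(P,Q) = [¬P,¬Q]`, `¬¬P = P`. -/
def F.negF : F → F
  | .tt => .ff
  | .ff => .tt
  | .pos a => .neg a
  | .neg a => .pos a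
  | .dis P Q => .con P.negF Q.negF
  | .con P Q => .dis P.negF Q.negF

/-- Atoms are the propositional symbols and their negations. -/
def F.isAtom : F → Prop
  | .pos _ => True
  | .neg _ => True
  | _ => False

/-- Syntactic equivalence of formulas: the smallest congruence generated by
associativity and commutativity of both connectives and the unit laws
`[t,t]=t`, `(f,f)=f`, `[f,P]=P`, `(t,P)=P`. -/
inductive Equiv : F → F → Prop where
  | refl (P : F) : Equiv P P
  | symm {P Q : F} : Equiv P Q → Equiv Q P
  | trans {P Q R : F} : Equiv P Q → Equiv Q R → Equiv P R
  | disComm (P Q : F) : Equiv (.dis P Q) (.dis Q P)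
  | conComm (P Q : F) : Equiv (.con P Q) (.con Q P)
  | disAssoc (P Q R : F) : Equiv (.dis (.dis P Q) R) (.dis P (.dis Q R))
  | conAssoc (P Q R : F) : Equiv (.con (.con P Q) R) (.con P (.con Q R))
  | ttDis : Equiv (.dis .tt .tt) .tt
  | ffCon : Equiv (.con .ff .ff) .ff
  | ffDis (P : F) : Equiv (.dis .ff P) P
  | ttCon (P : F) : Equiv (.con .tt P) P
  | disCongr {P P' Q Q' : F} :
      Equiv P P' → Equiv Q Q' → Equiv (.dis P Q) (.dis P' Q')
  | conCongr {P P' Q Q' : F} :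
      Equiv P P' → Equiv Q Q' → Equiv (.con P Q) (.con P' Q')

/-- One-hole contexts. -/
inductive Ctx : Type where
  | hole : Ctx
  | disL : Ctx → F → Ctx
  | disR : F → Ctx → Ctx
  | conL : Ctx → F → Ctx
  | conR : F → Ctx → Ctx

/-- Plugging a formula into the hole of a context. -/
def Ctx.fill : Ctx → F → F
  | .hole, P => P
  | .disL C Q, P => .dis (C.fill P) Q
  | .disR Q C, P => .dis Q (C.fill P)
  | .conL C Q, P => .con (C.fill P) Q
  | .conR Q C, P => .con Q (C.fill P)

/-- Names of the inference rules of SKSg and SKS. -/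
inductive Rule : Type where
  | iDown | iUp | wDown | wUp | cDown | cUp | s | m
  | aiDown | aiUp | awDown | awUp | acDown | acUp
deriving DecidableEq

/-- The rules, read at the root of a formula (premise on the left,
conclusion on the right). -/
inductive RootStep : Rule → F → F → Prop where
  | iDown (P : F) : RootStep .iDown .tt (.dis P P.negF)
  | iUp (P : F) : RootStep .iUp (.con P P.negF) .ff
  | wDown (P : F) : RootStep .wDown .ff P
  | wUp (P : F) : RootStep .wUp P .tt
  | cDown (P : F) : RootStep .cDown (.dis P P) P
  | cUp (P : F) : RootStep .cUp P (.con P P)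
  | s (P Q R : F) : RootStep .s (.con P (.dis Q R)) (.dis (.con P Q) R)
  | m (P Q R S : F) :
      RootStep .m (.dis (.con P Q) (.con R S)) (.con (.dis P R) (.dis Q S))
  | aiDown (A : F) (h : A.isAtom) : RootStep .aiDown .tt (.dis A A.negF)
  | aiUp (A : F) (h : A.isAtom) : RootStep .aiUp (.con A A.negF) .ff
  | awDown (A : F) (h : A.isAtom) : RootStep .awDown .ff A
  | awUp (A : F) (h : A.isAtom) : RootStep .awUp A .tt
  | acDown (A : F) (h : A.isAtom) : RootStep .acDown (.dis A A) A
  | acUp (A : F) (h : A.isAtom) : RootStep .acUp A (.con A A)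

/-- One inference step using a rule from the set `Rs`, applied inside an
arbitrary context and modulo the equivalence. -/
def Step (Rs : Set Rule) (P Q : F) : Prop :=
  ∃ r ∈ Rs, ∃ (C : Ctx) (P' Q' : F),
    RootStep r P' Q' ∧ Equiv P (C.fill P') ∧ Equiv (C.fill Q') Q

/-- Derivations over an arbitrary step relation: a finite sequence of rule
instances from the premise to the conclusion (modulo the equivalence). -/
inductive Deriv (St : F → F → Prop) : F → F → Prop where
  | eqv {P Q : F} : Equiv P Q → Deriv St P Q
  | step {P Q R : F} : St P Q → Deriv St Q R → Deriv St P R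

/-- The system SKSg: general (non-atomic) rules plus switch. -/
def SKSg : Set Rule := {.iDown, .iUp, .wDown, .wUp, .cDown, .cUp, .s}

/-- The system SKS: atomic rules plus switch and medial. -/
def SKS : Set Rule := {.aiDown, .aiUp, .awDown, .awUp, .acDown, .acUp, .s, .m}

/-- The system KS: the down fragment of SKS. -/
def KS : Set Rule := {.aiDown, .awDown, .acDown, .s, .m}

/-- A proof of `Q` in the system `Rs` is a derivation from the unit `t` to `Q`. -/
def Proof (Rs : Set Rule) (Q : F) : Prop := Deriv (Step Rs) .tt Q

/-- A rule `r` is derivable from a set `Rs` of rules if every instance of `r`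
(with premise `P` and conclusion `Q`) can be replaced by a derivation from
`P` to `Q` using only rules of `Rs`. -/
def RuleDerivable (r : Rule) (Rs : Set Rule) : Prop :=
  ∀ P Q : F, Step {r} P Q → Deriv (Step Rs) P Q

end DI

/-!
The argument is semantic. Every rule preserves truth under Boolean valuations, so a provable
formula is a tautology, and it is enough to prove every tautology in KS.

In KS, weakening is derivable for arbitrary formulas by deep inference, and so is contraction,
where medial handles the conjunctions. Two switches followed by a contraction lead from
`([P,R],[Q,R])` to `[(P,Q),R]`, which is distributivity read backwards; hence a formula is provable
as soon as all the clauses of its conjunctive normal form are. The clauses of a tautology are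
tautologies. Such a clause is made true in particular by the valuation under which `a` holds iff `ā`
occurs in the clause, and this forces `t`, or both of `a` and `ā`, to occur in it; it then follows
from `t` or `[a,ā]` by weakening and contraction.
-/

namespace DI

local infixr:65 " ⋎ " => F.dis
local infixr:70 " ⋏ " => F.con
local infix:50 " ≋ " => Equiv
local notation:50 P:51 " ⇝[" Rs "] " Q:51 => Deriv (Step Rs) P Q

variable {Rs : Set Rule} {P P' Q Q' R : F}

namespace Equiv

instance : Trans Equiv Equiv Equiv := ⟨trans⟩

theorem dis_ff (P : F) : P ⋎ .ff ≋ P := (disComm _ _).trans (ffDis _)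

theorem con_tt (P : F) : P ⋏ .tt ≋ P := (conComm _ _).trans (ttCon _)

theorem dis_left_comm (P Q R : F) : P ⋎ Q ⋎ R ≋ Q ⋎ P ⋎ R :=
  calc P ⋎ Q ⋎ R
    _ ≋ (P ⋎ Q) ⋎ R := (disAssoc _ _ _).symm
    _ ≋ (Q ⋎ P) ⋎ R := disCongr (disComm _ _) (refl _)
    _ ≋ Q ⋎ P ⋎ R := disAssoc _ _ _

theorem dis_dis_dis_comm (P Q R S : F) : (P ⋎ Q) ⋎ (R ⋎ S) ≋ (P ⋎ R) ⋎ (Q ⋎ S) :=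
  calc (P ⋎ Q) ⋎ (R ⋎ S)
    _ ≋ P ⋎ Q ⋎ R ⋎ S := disAssoc _ _ _
    _ ≋ P ⋎ R ⋎ Q ⋎ S := disCongr (refl _) (dis_left_comm _ _ _)
    _ ≋ (P ⋎ R) ⋎ (Q ⋎ S) := (disAssoc _ _ _).symm

theorem fill (C : Ctx) (h : P ≋ Q) : C.fill P ≋ C.fill Q := by
  induction C with
  | hole => exact h
  | disL _ _ ih => exact disCongr ih (refl _)
  | disR _ _ ih => exact disCongr (refl _) ih
  | conL _ _ ih => exact conCongr ih (refl _)
  | conR _ _ ih => exact conCongr (refl _) ih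

end Equiv

/-- Composition of contexts: `C.comp D` is `C{D{ }}`. -/
def Ctx.comp : Ctx → Ctx → Ctx
  | .hole, D => D
  | .disL C Q, D => .disL (C.comp D) Q
  | .disR Q C, D => .disR Q (C.comp D)
  | .conL C Q, D => .conL (C.comp D) Q
  | .conR Q C, D => .conR Q (C.comp D)

theorem Ctx.fill_comp (C D : Ctx) (P : F) : (C.comp D).fill P = C.fill (D.fill P) := by
  induction C <;> simp only [comp, fill, *]

namespace Step

theorem of_equiv_left (e : P ≋ Q) (h : Step Rs Q R) : Step Rs P R := by
  obtain ⟨r, hr, C, A, B, hAB, hQ, hR⟩ := h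
  exact ⟨r, hr, C, A, B, hAB, e.trans hQ, hR⟩

theorem mono {Rs' : Set Rule} (hRs : Rs ⊆ Rs') (h : Step Rs P Q) : Step Rs' P Q := by
  obtain ⟨r, hr, h⟩ := h
  exact ⟨r, hRs hr, h⟩

theorem fill (C : Ctx) (h : Step Rs P Q) : Step Rs (C.fill P) (C.fill Q) := by
  obtain ⟨r, hr, D, A, B, hAB, hP, hQ⟩ := h
  refine ⟨r, hr, C.comp D, A, B, hAB, ?_, ?_⟩
  · simpa only [C.fill_comp] using hP.fill C
  · simpa only [C.fill_comp] using hQ.fill C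

end Step

namespace Deriv

theorem refl (P : F) : P ⇝[Rs] P := eqv (.refl P)

theorem trans (h : P ⇝[Rs] Q) (k : Q ⇝[Rs] R) : P ⇝[Rs] R := by
  induction h with
  | step h _ ih => exact step h (ih k)
  | eqv e =>
    cases k with
    | eqv e' => exact eqv (e.trans e')
    | step h k => exact step (h.of_equiv_left e) k

instance : Trans (Deriv (Step Rs)) (Deriv (Step Rs)) (Deriv (Step Rs)) := ⟨trans⟩

instance : Trans Equiv (Deriv (Step Rs)) (Deriv (Step Rs)) := ⟨fun e => (eqv e).trans⟩

instance : Trans (Deriv (Step Rs)) Equiv (Deriv (Step Rs)) := ⟨fun h e => h.trans (eqv e)⟩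

theorem mono {Rs' : Set Rule} (hRs : Rs ⊆ Rs') (h : P ⇝[Rs] Q) : P ⇝[Rs'] Q := by
  induction h with
  | eqv e => exact eqv e
  | step h _ ih => exact step (h.mono hRs) ih

theorem of_rootStep {r : Rule} (hr : r ∈ Rs) (h : RootStep r P Q) : P ⇝[Rs] Q :=
  step ⟨r, hr, .hole, P, Q, h, .refl _, .refl _⟩ (refl Q)

theorem fill (C : Ctx) (h : P ⇝[Rs] Q) : C.fill P ⇝[Rs] C.fill Q := by
  induction h with
  | eqv e => exact eqv (e.fill C)
  | step h _ ih => exact step (h.fill C) ih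

theorem dis (h : P ⇝[Rs] P') (k : Q ⇝[Rs] Q') : P ⋎ Q ⇝[Rs] P' ⋎ Q' :=
  (h.fill (.disL .hole Q)).trans (k.fill (.disR P' .hole))

theorem con (h : P ⇝[Rs] P') (k : Q ⇝[Rs] Q') : P ⋏ Q ⇝[Rs] P' ⋏ Q' :=
  (h.fill (.conL .hole Q)).trans (k.fill (.conR P' .hole))

theorem weakening (P : F) : .ff ⇝[{.awDown, .s}] P := by
  induction P with
  | tt =>
    calc F.ff
      _ ≋ .ff ⋏ .tt := (Equiv.con_tt _).symm
      _ ≋ .ff ⋏ (.tt ⋎ .tt) := .conCongr (.refl _) Equiv.ttDis.symm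
      _ ⇝[{.awDown, .s}] (.ff ⋏ .tt) ⋎ .tt := of_rootStep (by simp) (.s _ _ _)
      _ ≋ .ff ⋎ .tt := .disCongr (.con_tt _) (.refl _)
      _ ≋ .tt := .ffDis _
  | ff => exact refl _
  | pos a => exact of_rootStep (by simp) (.awDown (.pos a) trivial)
  | neg a => exact of_rootStep (by simp) (.awDown (.neg a) trivial)
  | dis P Q hP hQ =>
    calc F.ff
      _ ≋ .ff ⋎ .ff := (Equiv.ffDis _).symm
      _ ⇝[{.awDown, .s}] P ⋎ Q := hP.dis hQ
  | con P Q hP hQ =>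
    calc F.ff
      _ ≋ .ff ⋏ .ff := Equiv.ffCon.symm
      _ ⇝[{.awDown, .s}] P ⋏ Q := hP.con hQ

theorem dis_inl (P Q : F) : P ⇝[{.awDown, .s}] P ⋎ Q :=
  calc P
    _ ≋ P ⋎ .ff := (Equiv.dis_ff _).symm
    _ ⇝[{.awDown, .s}] P ⋎ Q := (refl P).dis (weakening Q)

theorem dis_inr (P Q : F) : Q ⇝[{.awDown, .s}] P ⋎ Q :=
  calc Q
    _ ≋ .ff ⋎ Q := (Equiv.ffDis _).symm
    _ ⇝[{.awDown, .s}] P ⋎ Q := (weakening P).dis (refl Q)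

theorem contraction (P : F) : P ⋎ P ⇝[{.acDown, .m}] P := by
  induction P with
  | tt => exact eqv .ttDis
  | ff => exact eqv (.ffDis _)
  | pos a => exact of_rootStep (by simp) (.acDown (.pos a) trivial)
  | neg a => exact of_rootStep (by simp) (.acDown (.neg a) trivial)
  | dis P Q hP hQ =>
    calc (P ⋎ Q) ⋎ (P ⋎ Q)
      _ ≋ (P ⋎ P) ⋎ (Q ⋎ Q) := .dis_dis_dis_comm _ _ _ _
      _ ⇝[{.acDown, .m}] P ⋎ Q := hP.dis hQ
  | con P Q hP hQ =>
    calc (P ⋏ Q) ⋎ (P ⋏ Q)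
      _ ⇝[{.acDown, .m}] (P ⋎ P) ⋏ (Q ⋎ Q) := of_rootStep (by simp) (.m _ _ _ _)
      _ ⇝[{.acDown, .m}] P ⋏ Q := hP.con hQ

theorem distributivity (P Q R : F) : (P ⋎ R) ⋏ (Q ⋎ R) ⇝[{.acDown, .s, .m}] (P ⋏ Q) ⋎ R :=
  have switch (P Q R : F) : P ⋏ (Q ⋎ R) ⇝[{.acDown, .s, .m}] (P ⋏ Q) ⋎ R :=
    of_rootStep (by simp) (.s P Q R)
  calc (P ⋎ R) ⋏ (Q ⋎ R)
    _ ⇝[{.acDown, .s, .m}] ((P ⋎ R) ⋏ Q) ⋎ R := switch _ _ _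
    _ ≋ (Q ⋏ (P ⋎ R)) ⋎ R := .disCongr (.conComm _ _) (.refl _)
    _ ⇝[{.acDown, .s, .m}] ((Q ⋏ P) ⋎ R) ⋎ R := (switch _ _ _).dis (refl R)
    _ ≋ (Q ⋏ P) ⋎ R ⋎ R := .disAssoc _ _ _
    _ ≋ (P ⋏ Q) ⋎ R ⋎ R := .disCongr (.conComm _ _) (.refl _)
    _ ⇝[{.acDown, .s, .m}] (P ⋏ Q) ⋎ R := (refl _).dis ((contraction R).mono (by grind))

end Deriv

namespace F

/-- `P.Holds v`: the formula `P` is true under the valuation `v` of the propositional symbols. -/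
def Holds (v : ℕ → Prop) : F → Prop
  | .tt => True
  | .ff => False
  | .pos a => v a
  | .neg a => ¬ v a
  | .dis P Q => P.Holds v ∨ Q.Holds v
  | .con P Q => P.Holds v ∧ Q.Holds v

/-- Validity: the formula is a tautology of classical propositional logic. -/
def Valid (P : F) : Prop := ∀ v, P.Holds v

theorem holds_negF (v : ℕ → Prop) (P : F) : P.negF.Holds v ↔ ¬ P.Holds v := by
  induction P <;> simp only [negF, Holds] <;> tauto

end F

section Soundness

variable {v : ℕ → Prop}

theorem Equiv.holds_iff (h : P ≋ Q) : P.Holds v ↔ Q.Holds v := by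
  induction h <;> grind only [F.Holds]

theorem Ctx.holds_fill (C : Ctx) (h : P.Holds v → Q.Holds v) :
    (C.fill P).Holds v → (C.fill Q).Holds v := by
  induction C <;> simp only [fill, F.Holds] <;> tauto

theorem RootStep.holds {r : Rule} (h : RootStep r P Q) : P.Holds v → Q.Holds v := by
  cases h <;> simp only [F.Holds, F.holds_negF] <;> tauto

theorem Step.holds (h : Step Rs P Q) (hP : P.Holds v) : Q.Holds v := by
  obtain ⟨r, -, C, A, B, hAB, eP, eQ⟩ := h
  exact eQ.holds_iff.1 (C.holds_fill hAB.holds (eP.holds_iff.1 hP))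

theorem Deriv.holds (h : P ⇝[Rs] Q) : P.Holds v → Q.Holds v := by
  induction h with
  | eqv e => exact e.holds_iff.1
  | step h _ ih => exact ih ∘ h.holds

theorem Proof.valid (h : Proof Rs P) : P.Valid := fun _ => h.holds trivial

end Soundness

theorem Proof.con (hP : Proof Rs P) (hQ : Proof Rs Q) : Proof Rs (P ⋏ Q) :=
  calc F.tt
    _ ≋ .tt ⋏ .tt := (Equiv.ttCon _).symm
    _ ⇝[Rs] P ⋏ Q := Deriv.con hP hQ

namespace F

/-- The disjuncts of a formula: its maximal subformulas that are not themselves disjunctions. -/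
def disjuncts : F → Set F
  | .dis P Q => P.disjuncts ∪ Q.disjuncts
  | P => {P}

theorem holds_iff_exists_mem_disjuncts {v : ℕ → Prop} :
    P.Holds v ↔ ∃ A ∈ P.disjuncts, A.Holds v := by
  induction P <;> simp_all [disjuncts, Holds, or_and_right, exists_or]

theorem deriv_of_mem_disjuncts {A : F} (hA : A ∈ P.disjuncts) : A ⇝[{.awDown, .s}] P := by
  induction P with
  | dis P Q hP hQ =>
    rcases hA with hA | hA
    · exact (hP hA).trans (.dis_inl P Q)
    · exact (hQ hA).trans (.dis_inr P Q)
  | _ => obtain rfl := hA; exact .refl _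

/-- Clauses, that is, disjunctions of atoms and units. -/
def IsClause (C : F) : Prop := ∀ A ∈ C.disjuncts, A.isAtom ∨ A = .tt ∨ A = .ff

theorem IsClause.dis (hP : P.IsClause) (hQ : Q.IsClause) : (P ⋎ Q).IsClause :=
  fun A hA => hA.elim (hP A) (hQ A)

theorem IsClause.proof_of_valid {C : F} (hC : C.IsClause) (hv : C.Valid) : Proof KS C := by
  have of_mem {A : F} (hA : A ∈ C.disjuncts) : A ⇝[KS] C :=
    (deriv_of_mem_disjuncts hA).mono (by grind [KS])
  obtain ⟨A, hA, hAv⟩ := holds_iff_exists_mem_disjuncts.1 (hv fun a => .neg a ∈ C.disjuncts)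
  cases A with
  | tt => exact of_mem hA
  | ff => exact hAv.elim
  | pos a =>
    calc F.tt
      _ ⇝[KS] .pos a ⋎ .neg a := .of_rootStep (by simp [KS]) (.aiDown (.pos a) trivial)
      _ ⇝[KS] C ⋎ C := (of_mem hA).dis (of_mem hAv)
      _ ⇝[KS] C := (Deriv.contraction C).mono (by grind [KS])
  | neg a => exact (hAv hA).elim
  | dis P Q => simpa [isAtom] using hC _ hA
  | con P Q => simpa [isAtom] using hC _ hA

/-- The clauses of the conjunctive normal form of a formula. -/
def clauses : F → Set F
  | .dis P Q => Set.image2 .dis P.clauses Q.clauses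
  | .con P Q => P.clauses ∪ Q.clauses
  | P => {P}

theorem isClause_of_mem_clauses {C : F} (hC : C ∈ P.clauses) : C.IsClause := by
  induction P generalizing C with
  | dis P Q hP hQ =>
    obtain ⟨C, hC, D, hD, rfl⟩ := hC
    exact (hP hC).dis (hQ hD)
  | con P Q hP hQ => exact hC.elim hP hQ
  | _ => obtain rfl := hC; simp [IsClause, disjuncts, isAtom]

theorem Holds.of_mem_clauses {v : ℕ → Prop} {C : F} (hP : P.Holds v) (hC : C ∈ P.clauses) :
    C.Holds v := by
  induction P generalizing C with
  | dis P Q ihP ihQ =>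
    obtain ⟨C, hC, D, hD, rfl⟩ := hC
    exact hP.imp (ihP · hC) (ihQ · hD)
  | con P Q ihP ihQ => exact hC.elim (ihP hP.1) (ihQ hP.2)
  | _ => obtain rfl := hC; exact hP

/-- The side formula `R` holds the other disjuncts while one disjunct is being decomposed. -/
theorem proof_dis_of_clauses (hRs : {.acDown, .s, .m} ⊆ Rs)
    (h : ∀ C ∈ P.clauses, Proof Rs (C ⋎ R)) : Proof Rs (P ⋎ R) := by
  induction P generalizing R with
  | dis P Q hP hQ =>
    have hPQ : Proof Rs (P ⋎ Q ⋎ R) := hP fun C hC => by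
      have hQC : Proof Rs (Q ⋎ C ⋎ R) := hQ fun D hD =>
        calc F.tt
          _ ⇝[Rs] (C ⋎ D) ⋎ R := h _ (Set.mem_image2_of_mem hC hD)
          _ ≋ C ⋎ D ⋎ R := .disAssoc _ _ _
          _ ≋ D ⋎ C ⋎ R := .dis_left_comm _ _ _
      exact hQC.trans (.eqv (.dis_left_comm _ _ _))
    exact hPQ.trans (.eqv (Equiv.disAssoc _ _ _).symm)
  | con P Q hP hQ =>
    calc F.tt
      _ ⇝[Rs] (P ⋎ R) ⋏ (Q ⋎ R) :=
        (hP fun C hC => h C (.inl hC)).con (hQ fun C hC => h C (.inr hC))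
      _ ⇝[Rs] (P ⋏ Q) ⋎ R := (Deriv.distributivity P Q R).mono hRs
  | _ => exact h _ rfl

theorem proof_of_clauses (hRs : {.acDown, .s, .m} ⊆ Rs) (h : ∀ C ∈ P.clauses, Proof Rs C) :
    Proof Rs P :=
  have hP : Proof Rs (P ⋎ .ff) := proof_dis_of_clauses hRs fun C hC =>
    Deriv.trans (h C hC) (.eqv (Equiv.dis_ff C).symm)
  Deriv.trans hP (.eqv (.dis_ff P))

theorem Valid.proof (hP : P.Valid) : Proof KS P :=
  proof_of_clauses (by grind [KS]) fun _ hC =>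
    (isClause_of_mem_clauses hC).proof_of_valid fun v => (hP v).of_mem_clauses hC

end F

theorem sks_cut_elimination_general (P : F) (h : Proof Rs P) : Proof KS P :=
  h.valid.proof

/-- cut elimination for SKS.
Every proof in the system SKS of a formula `P` can be transformed into a
proof in the system KS of `P`; in particular the up rules `ai↑`, `aw↑` and
`ac↑` are admissible for KS. -/
theorem sks_cut_elimination (P : F) (h : Proof SKS P) : Proof KS P :=
  sks_cut_elimination_general P h

end DI
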